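/- Let R : ℕ → Set ℕ be a sequence of subsets of ℕ, and for each i define the real number x_i := Σ_{n=0}^∞ 2·χ(i ∈ R_n)/3^{n+1}, where χ(P) = 1 if P holds and 0 otherwise. If f : ℕ → ℕ is strictly monotone and (x_{f(j)})_{j∈ℕ} is a Cauchy sequence of real numbers, then the range of f is strongly cohesive for (R_n)_{n∈ℕ}. -/

import Mathlib

open scoped Classical

/-- The Cantor middle-thirds code of a predicate. -/
noncomputable def cantorCode (p : ℕ → Prop) : ℝ :=
  ∑' n : ℕ, 2 * (if p n then (1 : ℝ) else 0) / 3 ^ (n + 1)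

theorem hasSum_two_thirds : HasSum (fun n : ℕ => (2 : ℝ) / 3 ^ (n + 1)) 1 := by
  have h := (hasSum_geometric_of_lt_one (r := (1 / 3 : ℝ)) (by norm_num) (by norm_num)).mul_left
    (2 / 3)
  have e1 : (fun n : ℕ => (2 : ℝ) / 3 ^ (n + 1)) = fun n : ℕ => 2 / 3 * (1 / 3 : ℝ) ^ n := by
    funext n
    rw [pow_succ, one_div, inv_pow]
    field_simp
  have e2 : (2 / 3 * (1 - 1 / 3)⁻¹ : ℝ) = 1 := by norm_num
  rw [e2] at h
  rw [e1]
  exact h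

theorem cantorTerm_nonneg (p : ℕ → Prop) (n : ℕ) :
    0 ≤ 2 * (if p n then (1 : ℝ) else 0) / 3 ^ (n + 1) := by
  split_ifs <;> positivity

theorem cantorTerm_le (p : ℕ → Prop) (n : ℕ) :
    2 * (if p n then (1 : ℝ) else 0) / 3 ^ (n + 1) ≤ 2 / 3 ^ (n + 1) := by
  split_ifs
  · simp
  · simp only [mul_zero, zero_div]; positivity

theorem cantor_summable (p : ℕ → Prop) :
    Summable (fun n : ℕ => 2 * (if p n then (1 : ℝ) else 0) / 3 ^ (n + 1)) :=
  Summable.of_nonneg_of_le (cantorTerm_nonneg p) (cantorTerm_le p) hasSum_two_thirds.summable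

theorem cantorCode_nonneg (p : ℕ → Prop) : 0 ≤ cantorCode p :=
  tsum_nonneg (cantorTerm_nonneg p)

theorem cantorCode_le_one (p : ℕ → Prop) : cantorCode p ≤ 1 :=
  hasSum_le (cantorTerm_le p) (cantor_summable p).hasSum hasSum_two_thirds

theorem cantorCode_step (p : ℕ → Prop) :
    cantorCode p = 2 * (if p 0 then (1 : ℝ) else 0) / 3 + cantorCode (fun n => p (n + 1)) / 3 := by
  unfold cantorCode
  rw [(cantor_summable p).tsum_eq_zero_add, ← tsum_div_const]
  congr 1
  · simp
  · refine tsum_congr fun n => ?_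
    rw [pow_succ 3 (n + 1), div_div]

theorem cantorCode_agree (k : ℕ) : ∀ p q : ℕ → Prop,
    |cantorCode p - cantorCode q| < 1 / 3 ^ k → ∀ i < k, (p i ↔ q i) := by
  induction k with
  | zero => intro p q _ i hi; omega
  | succ k ih =>
    intro p q h i hi
    have hp := cantorCode_step p
    have hq := cantorCode_step q
    have h1 := cantorCode_nonneg (fun n => p (n + 1))
    have h2 := cantorCode_le_one (fun n => p (n + 1))
    have h3 := cantorCode_nonneg (fun n => q (n + 1))
    have h4 := cantorCode_le_one (fun n => q (n + 1))
    have hk : (1 : ℝ) / 3 ^ (k + 1) = 1 / 3 ^ k / 3 := by rw [pow_succ, div_div]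
    have hk1 : (1 : ℝ) / 3 ^ k ≤ 1 := by
      rw [div_le_one (by positivity)]
      exact one_le_pow₀ (by norm_num)
    rw [hk, abs_lt] at h
    obtain ⟨ha, hb⟩ := h
    have h0 : p 0 ↔ q 0 := by
      by_cases hp0 : p 0 <;> by_cases hq0 : q 0 <;> simp only [hp0, hq0, if_true, if_false] at hp hq ⊢
      · linarith
      · linarith
    cases i with
    | zero => exact h0
    | succ i =>
      refine ih (fun n => p (n + 1)) (fun n => q (n + 1)) ?_ i (by omega)
      simp only [h0] at hp
      rw [abs_lt]
      constructor <;> linarith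

/-- If `x_i = Σ_n 2·χ(i ∈ R_n)/3^(n+1)` encodes the membership pattern of `i`
in the sets `R_n`, `f` is strictly monotone and `(x_{f(j)})` is a Cauchy
sequence of reals, then the range of `f` is strongly cohesive for `(R_n)`. -/
theorem bw_weak_implies_stcoh (R : ℕ → Set ℕ) (x : ℕ → ℝ)
    (hx : ∀ i, x i = ∑' n : ℕ, 2 * (if i ∈ R n then (1 : ℝ) else 0) / 3 ^ (n + 1))
    (f : ℕ → ℕ) (hf : StrictMono f)
    (hcauchy : CauchySeq (fun j => x (f j))) :
    ∀ n : ℕ, ∃ s : ℕ, ∀ i < n,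
      (∀ j ≥ s, f j ∈ R i) ∨ (∀ j ≥ s, f j ∉ R i) := by
  intro n
  obtain ⟨s, hs⟩ := Metric.cauchySeq_iff'.1 hcauchy (1 / 3 ^ n) (by positivity)
  have key : ∀ j ≥ s, ∀ i < n, (f j ∈ R i ↔ f s ∈ R i) := by
    intro j hj
    have h := hs j hj
    rw [Real.dist_eq, hx, hx] at h
    exact cantorCode_agree n (fun m => f j ∈ R m) (fun m => f s ∈ R m) h
  refine ⟨s, fun i hi => ?_⟩
  by_cases hsi : f s ∈ R i
  · exact Or.inl fun j hj => (key j hj i hi).2 hsi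
  · exact Or.inr fun j hj hji => hsi ((key j hj i hi).1 hji)
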